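/- Let b = 1/2 + √(1/2) and c = 1/2 − √(1/2), and let M be the 4×3 real matrix with rows (−c, c, b), (−c, b, c), (−b, c, b), (b, −b, −c). Then Mᵀ M equals the matrix [[3,−1,−1],[−1,3,−1],[−1,−1,3]] (the Gram matrix of the body-centered cubic lattice), and for every 3-element subset S of {1,2,3,4}: det(M_Sᵀ M_S) = 4, and for every nonzero u ∈ ℤ³, ‖M_S u‖² ≥ 9/4 − 1/√2, with equality attained for some nonzero u ∈ ℤ³; here M_S is the 3×3 matrix of rows of M indexed by S. -/

import Mathlib

open Matrix

/-- The `k × k` submatrix of `M` formed by the rows indexed by the `k`-element subset `S`. -/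
def rowsSub {n k : ℕ} (M : Matrix (Fin n) (Fin k) ℝ)
    (S : {s : Finset (Fin n) // s.card = k}) : Matrix (Fin k) (Fin k) ℝ :=
  fun i j => M ((S.1.orderIsoOfFin S.2 i : Fin n)) j

/-- Squared Euclidean norm of a vector in `ℝ^k`. -/
def sqnorm {k : ℕ} (x : Fin k → ℝ) : ℝ := ∑ i, x i ^ 2

/-!
Deleting the row `m` of `M` replaces the Gram matrix `G` of the mother lattice by `G - m mᵀ`.
In the four coordinates of an obtuse superbase, `G` becomes `∑_{i<j} (x i - x j)²`, which every
permutation of the coordinates preserves, and each row of `M` becomes a permutation of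
`(b, -b, c, -c)`, so the four child lattices are isometric. With `α = x 0 - x 1`, `β = x 2 - x 3`
and `γ = x 0 + x 1 - x 2 - x 3`, the form of the child lattice is
`A α² + (1 / 2) α β + (2 - c²) β² + γ²` with `A = 2 - b²`, where `α + β + γ` is even.
Its binary part has determinant `1`, so it is at least `A⁻¹ ≥ A + 1` once `β ≠ 0`; when `β = 0`,
parity gives `A α² + γ² ≥ A + 1`. The minimum `A + 1 = 3 - b²` is reached at
`(α, β, γ) = (±1, 0, ±1)`.
-/

section Rows

lemma exists_rowsSub_eq_submatrix_succAbove {n : ℕ} (M : Matrix (Fin (n + 1)) (Fin n) ℝ)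
    (S : {s : Finset (Fin (n + 1)) // s.card = n}) :
    ∃ r : Fin (n + 1), rowsSub M S = M.submatrix r.succAbove id := by
  obtain ⟨s, hs⟩ := S
  have hcompl : sᶜ.card = 1 := by simp [Finset.card_compl, hs]
  obtain ⟨r, hr⟩ := Finset.card_eq_one.mp hcompl
  obtain rfl : s = {r}ᶜ := by rw [← hr, compl_compl]
  refine ⟨r, ?_⟩
  ext i j
  exact congrArg (M · j) (Finset.orderEmbOfFin_compl_singleton_apply hs i)

lemma gram_submatrix_succAbove {R ι : Type*} [CommRing R] {n : ℕ} (M : Matrix (Fin (n + 1)) ι R)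
    (r : Fin (n + 1)) :
    (M.submatrix r.succAbove id)ᵀ * M.submatrix r.succAbove id =
      Mᵀ * M - vecMulVec (M r) (M r) := by
  ext i j
  simp [mul_apply, vecMulVec_apply, Fin.sum_univ_succAbove _ r]

lemma sqnorm_mulVec {l k : ℕ} (A : Matrix (Fin l) (Fin k) ℝ) (u : Fin k → ℝ) :
    sqnorm (A *ᵥ u) = u ⬝ᵥ (Aᵀ * A) *ᵥ u := by
  rw [← mulVec_mulVec, dotProduct_mulVec, vecMul_transpose]
  simp only [sqnorm, dotProduct, sq]

lemma dotProduct_sub_vecMulVec_mulVec {R ι : Type*} [CommRing R] [Fintype ι] (G : Matrix ι ι R)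
    (v u : ι → R) :
    u ⬝ᵥ (G - vecMulVec v v) *ᵥ u = u ⬝ᵥ G *ᵥ u - (v ⬝ᵥ u) ^ 2 := by
  rw [sub_mulVec, dotProduct_sub, vecMulVec_mulVec, dotProduct_smul, dotProduct_comm u v]
  simp [sq]

end Rows

section Superbase

variable {R : Type*} [CommRing R]

/-- The Gram matrix of the body-centered cubic lattice. -/
def bccGram (R : Type*) [CommRing R] : Matrix (Fin 3) (Fin 3) R :=
  !![3, -1, -1; -1, 3, -1; -1, -1, 3]

/-- The norm form `∑_{i<j} (x i - x j)²` of the body-centered cubic lattice in the coordinates of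
an obtuse superbase, which are determined up to a common additive constant. It is written through
power sums to make its invariance under permutations evident. -/
def superbaseForm (x : Fin 4 → R) : R := 4 * ∑ i, x i ^ 2 - (∑ i, x i) ^ 2

/-- The linear form `v`, extended by the coefficient that makes it vanish on constant vectors. -/
def zeroSumExtension {n : ℕ} (v : Fin n → R) : Fin (n + 1) → R := Fin.snoc v (-∑ i, v i)

lemma superbaseForm_comp_perm (σ : Equiv.Perm (Fin 4)) (x : Fin 4 → R) :
    superbaseForm (x ∘ σ) = superbaseForm x := by
  simp only [superbaseForm, Function.comp_apply, Equiv.sum_comp σ x,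
    Equiv.sum_comp σ (fun i => x i ^ 2)]

lemma dotProduct_bccGram_mulVec (u : Fin 3 → R) :
    u ⬝ᵥ bccGram R *ᵥ u = superbaseForm (Fin.snoc u 0) := by
  simp only [superbaseForm, Fin.sum_univ_castSucc (n := 3), Fin.snoc_castSucc, Fin.snoc_last]
  simp only [bccGram, dotProduct, mulVec, Fin.sum_univ_three, of_apply, cons_val', cons_val_zero,
    cons_val_one, cons_val, cons_val_fin_one]
  ring

lemma zeroSumExtension_fin_three (v : Fin 3 → R) :
    zeroSumExtension v = ![v 0, v 1, v 2, -(v 0 + v 1 + v 2)] := by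
  rw [← Fin.sum_univ_three]
  ext i
  fin_cases i <;> rfl

lemma zeroSumExtension_dotProduct_snoc_zero {n : ℕ} (v u : Fin n → R) :
    zeroSumExtension v ⬝ᵥ Fin.snoc u 0 = v ⬝ᵥ u := by
  simp [zeroSumExtension, dotProduct, Fin.sum_univ_castSucc]

lemma sum_sq_zeroSumExtension {n : ℕ} (v : Fin n → R) :
    ∑ i, zeroSumExtension v i ^ 2 = ∑ i, v i ^ 2 + (∑ i, v i) ^ 2 := by
  simp [zeroSumExtension, Fin.sum_univ_castSucc]

lemma det_bccGram_sub_vecMulVec (v : Fin 3 → R) :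
    (bccGram R - vecMulVec v v).det = 16 - 4 * ∑ i, zeroSumExtension v i ^ 2 := by
  rw [sum_sq_zeroSumExtension]
  simp only [bccGram, det_fin_three, Matrix.sub_apply, of_apply, vecMulVec_apply,
    Fin.sum_univ_three, cons_val', cons_val_zero, cons_val_one, cons_val, cons_val_fin_one]
  ring

end Superbase

section IntegralMinimum

lemma one_le_sq_cast {n : ℤ} (hn : n ≠ 0) : (1 : ℝ) ≤ (n : ℝ) ^ 2 := by
  exact_mod_cast (one_le_sq_iff_one_le_abs n).mpr (Int.one_le_abs hn)

lemma inv_le_binaryForm {A B C : ℝ} (hA : 0 < A) (hdet : A * C - B ^ 2 = 1) (m : ℝ) {n : ℤ}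
    (hn : n ≠ 0) : A⁻¹ ≤ A * m ^ 2 + 2 * B * m * n + C * (n : ℝ) ^ 2 := by
  have hsq : A * (A * m ^ 2 + 2 * B * m * n + C * (n : ℝ) ^ 2) = (A * m + B * n) ^ 2 + n ^ 2 := by
    linear_combination (n : ℝ) ^ 2 * hdet
  rw [inv_le_iff_one_le_mul₀' hA, hsq]
  linarith [one_le_sq_cast hn, sq_nonneg (A * m + B * n)]

lemma add_one_le_diagonalForm_of_even {A : ℝ} (hA : 1 / 3 ≤ A) (hA' : A ≤ 3) {m k : ℤ}
    (hpar : Even (m + k)) (hne : m ≠ 0 ∨ k ≠ 0) : A + 1 ≤ A * (m : ℝ) ^ 2 + (k : ℝ) ^ 2 := by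
  rcases Int.even_or_odd m with hm | hm
  · have hk : Even k := (Int.even_add.mp hpar).mp hm
    obtain ⟨m, rfl⟩ := hm.two_dvd
    obtain ⟨k, rfl⟩ := hk.two_dvd
    push_cast
    rcases hne with hm0 | hk0
    · have hm1 : (1 : ℝ) ≤ (m : ℝ) ^ 2 := one_le_sq_cast (right_ne_zero_of_mul hm0)
      nlinarith [sq_nonneg (k : ℝ)]
    · have hk1 : (1 : ℝ) ≤ (k : ℝ) ^ 2 := one_le_sq_cast (right_ne_zero_of_mul hk0)
      nlinarith [sq_nonneg (m : ℝ)]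
  · have hk : Odd k := (Int.even_add'.mp hpar).mp hm
    have hm1 : (1 : ℝ) ≤ (m : ℝ) ^ 2 := one_le_sq_cast (by rintro rfl; simp at hm)
    have hk1 : (1 : ℝ) ≤ (k : ℝ) ^ 2 := one_le_sq_cast (by rintro rfl; simp at hk)
    nlinarith

lemma add_one_le_ternaryForm_of_even {A B C : ℝ} (hA : 1 / 3 ≤ A) (hA' : A * (A + 1) ≤ 1)
    (hdet : A * C - B ^ 2 = 1) {m n k : ℤ} (hpar : Even (m + n + k))
    (hne : m ≠ 0 ∨ n ≠ 0 ∨ k ≠ 0) :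
    A + 1 ≤ A * (m : ℝ) ^ 2 + 2 * B * m * n + C * (n : ℝ) ^ 2 + (k : ℝ) ^ 2 := by
  have hA0 : 0 < A := by linarith
  rcases eq_or_ne n 0 with rfl | hn
  · have hmk : A + 1 ≤ A * (m : ℝ) ^ 2 + (k : ℝ) ^ 2 :=
      add_one_le_diagonalForm_of_even hA (by nlinarith) (by simpa using hpar) (by simpa using hne)
    simpa using hmk
  · calc A + 1 ≤ A⁻¹ := by rwa [inv_eq_one_div, le_div_iff₀' hA0]
      _ ≤ A * (m : ℝ) ^ 2 + 2 * B * m * n + C * (n : ℝ) ^ 2 := inv_le_binaryForm hA0 hdet m hn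
      _ ≤ _ := le_add_of_nonneg_right (sq_nonneg _)

end IntegralMinimum

section Code

/-- The generator matrix of the `(4,3)` code, in terms of the two constants `b` and `c`. -/
def codeMatrix (b c : ℝ) : Matrix (Fin 4) (Fin 3) ℝ :=
  !![-c, c, b; -c, b, c; -b, c, b; b, -b, -c]

/-- The common shape, up to permutation, of the rows of `codeMatrix b c` in superbase
coordinates. -/
def signedPairs (b c : ℝ) : Fin 4 → ℝ := ![b, -b, c, -c]

variable {b c : ℝ}

lemma transpose_codeMatrix_mul_self (hadd : b + c = 1) (hmul : b * c = -1 / 4) :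
    (codeMatrix b c)ᵀ * codeMatrix b c = bccGram ℝ := by
  have hsq : b ^ 2 + c ^ 2 = 3 / 2 := by linear_combination (b + c + 1) * hadd - 2 * hmul
  ext i j
  fin_cases i <;> fin_cases j <;>
    simp [codeMatrix, bccGram, mul_apply, Fin.sum_univ_four] <;> linarith

lemma exists_zeroSumExtension_codeMatrix_eq (b c : ℝ) (r : Fin 4) :
    ∃ σ : Equiv.Perm (Fin 4), zeroSumExtension (codeMatrix b c r) = signedPairs b c ∘ σ := by
  let σ : Fin 4 → Equiv.Perm (Fin 4) := ![
    ⟨![3, 2, 0, 1], ![2, 3, 1, 0], by decide, by decide⟩,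
    ⟨![3, 0, 2, 1], ![1, 3, 2, 0], by decide, by decide⟩,
    ⟨![1, 2, 0, 3], ![2, 0, 1, 3], by decide, by decide⟩,
    ⟨![0, 1, 3, 2], ![0, 1, 3, 2], by decide, by decide⟩]
  refine ⟨σ r, ?_⟩
  rw [zeroSumExtension_fin_three]
  ext i
  fin_cases r <;> fin_cases i <;> simp [σ, codeMatrix, signedPairs]

lemma exists_sq_codeMatrix_eq (b c : ℝ) (r : Fin 4) : ∃ j, codeMatrix b c r j ^ 2 = b ^ 2 := by
  refine ⟨![2, 1, 0, 0] r, ?_⟩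
  fin_cases r <;> simp [codeMatrix]

lemma superbaseForm_sub_sq_eq_ternaryForm (hmul : b * c = -1 / 4) (x : Fin 4 → ℝ) :
    superbaseForm x - (signedPairs b c ⬝ᵥ x) ^ 2 =
      (2 - b ^ 2) * (x 0 - x 1) ^ 2 + 2 * (1 / 4) * (x 0 - x 1) * (x 2 - x 3) +
        (2 - c ^ 2) * (x 2 - x 3) ^ 2 + (x 0 + x 1 - x 2 - x 3) ^ 2 := by
  simp only [superbaseForm, signedPairs, dotProduct, Fin.sum_univ_four, cons_val]
  linear_combination -2 * (x 0 - x 1) * (x 2 - x 3) * hmul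

lemma three_sub_sq_le_superbaseForm_sub_sq (hadd : b + c = 1) (hmul : b * c = -1 / 4)
    (hb : 0 < b) {x : Fin 4 → ℤ} (hx : ∃ i j, x i ≠ x j) :
    3 - b ^ 2 ≤ superbaseForm (fun i => (x i : ℝ)) -
      (signedPairs b c ⬝ᵥ fun i => (x i : ℝ)) ^ 2 := by
  have hb2 : b ^ 2 = b + 1 / 4 := by linear_combination b * hadd - hmul
  have hlo : 6 / 5 ≤ b := by nlinarith
  have hhi : b ≤ 17 / 12 := by nlinarith
  have hdet : (2 - b ^ 2) * (2 - c ^ 2) - (1 / 4) ^ 2 = 1 := by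
    linear_combination -2 * (b + c + 1) * hadd + (b * c + 15 / 4) * hmul
  have hpar : Even ((x 0 - x 1) + (x 2 - x 3) + (x 0 + x 1 - x 2 - x 3)) :=
    ⟨x 0 - x 3, by ring⟩
  have hne : x 0 - x 1 ≠ 0 ∨ x 2 - x 3 ≠ 0 ∨ x 0 + x 1 - x 2 - x 3 ≠ 0 := by
    contrapose! hx
    intro i j
    fin_cases i <;> fin_cases j <;> grind
  have hmin := add_one_le_ternaryForm_of_even (A := 2 - b ^ 2) (by linarith) (by nlinarith)
    hdet hpar hne
  rw [superbaseForm_sub_sq_eq_ternaryForm hmul]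
  push_cast at hmin
  linarith

lemma exists_snoc_zero_ne {n : ℕ} {u : Fin n → ℤ} (hu : u ≠ 0) :
    ∃ i j, (Fin.snoc u 0 : Fin (n + 1) → ℤ) i ≠ (Fin.snoc u 0 : Fin (n + 1) → ℤ) j := by
  obtain ⟨i, hi⟩ := Function.ne_iff.mp hu
  exact ⟨i.castSucc, Fin.last n, by simpa using hi⟩

lemma exists_gram_rowsSub_codeMatrix_eq (hadd : b + c = 1) (hmul : b * c = -1 / 4)
    (S : {s : Finset (Fin 4) // s.card = 3}) :
    ∃ r, (rowsSub (codeMatrix b c) S)ᵀ * rowsSub (codeMatrix b c) S =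
      bccGram ℝ - vecMulVec (codeMatrix b c r) (codeMatrix b c r) := by
  obtain ⟨r, hr⟩ := exists_rowsSub_eq_submatrix_succAbove (codeMatrix b c) S
  exact ⟨r, by rw [hr, gram_submatrix_succAbove, transpose_codeMatrix_mul_self hadd hmul]⟩

lemma det_gram_rowsSub_codeMatrix (hadd : b + c = 1) (hmul : b * c = -1 / 4)
    (S : {s : Finset (Fin 4) // s.card = 3}) :
    ((rowsSub (codeMatrix b c) S)ᵀ * rowsSub (codeMatrix b c) S).det = 4 := by
  obtain ⟨r, hr⟩ := exists_gram_rowsSub_codeMatrix_eq hadd hmul S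
  obtain ⟨σ, hσ⟩ := exists_zeroSumExtension_codeMatrix_eq b c r
  have hnorm : ∑ i, zeroSumExtension (codeMatrix b c r) i ^ 2 = 3 := by
    simp only [hσ, Function.comp_apply, Equiv.sum_comp σ (fun i => signedPairs b c i ^ 2)]
    simp only [signedPairs, Fin.sum_univ_four, cons_val]
    linear_combination 2 * (b + c + 1) * hadd - 4 * hmul
  rw [hr, det_bccGram_sub_vecMulVec, hnorm]
  norm_num

lemma three_sub_sq_le_sqnorm_rowsSub_codeMatrix (hadd : b + c = 1) (hmul : b * c = -1 / 4)
    (hb : 0 < b) (S : {s : Finset (Fin 4) // s.card = 3}) {u : Fin 3 → ℤ} (hu : u ≠ 0) :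
    3 - b ^ 2 ≤ sqnorm (rowsSub (codeMatrix b c) S *ᵥ fun j => (u j : ℝ)) := by
  obtain ⟨r, hr⟩ := exists_gram_rowsSub_codeMatrix_eq hadd hmul S
  obtain ⟨σ, hσ⟩ := exists_zeroSumExtension_codeMatrix_eq b c r
  obtain ⟨i, j, hij⟩ := exists_snoc_zero_ne hu
  let x : Fin 4 → ℤ := Fin.snoc u 0 ∘ σ.symm
  have hx : (fun i => (x i : ℝ)) = Fin.snoc (fun j => (u j : ℝ)) 0 ∘ σ.symm := by
    have hcast := Fin.comp_snoc (Int.cast : ℤ → ℝ) u 0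
    rw [Int.cast_zero] at hcast
    exact congrArg (· ∘ σ.symm) hcast
  have hmin := three_sub_sq_le_superbaseForm_sub_sq hadd hmul hb (x := x)
    ⟨σ i, σ j, by simpa [x] using hij⟩
  rwa [hx, superbaseForm_comp_perm, dotProduct_comp_equiv_symm, ← hσ,
    zeroSumExtension_dotProduct_snoc_zero, ← dotProduct_bccGram_mulVec,
    ← dotProduct_sub_vecMulVec_mulVec, ← hr, ← sqnorm_mulVec] at hmin

lemma exists_sqnorm_rowsSub_codeMatrix_eq (hadd : b + c = 1) (hmul : b * c = -1 / 4)
    (S : {s : Finset (Fin 4) // s.card = 3}) :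
    ∃ u : Fin 3 → ℤ, u ≠ 0 ∧
      sqnorm (rowsSub (codeMatrix b c) S *ᵥ fun j => (u j : ℝ)) = 3 - b ^ 2 := by
  obtain ⟨r, hr⟩ := exists_gram_rowsSub_codeMatrix_eq hadd hmul S
  obtain ⟨j, hj⟩ := exists_sq_codeMatrix_eq b c r
  have hcast : (fun i => ((Pi.single j (1 : ℤ) : Fin 3 → ℤ) i : ℝ)) = Pi.single j 1 := by
    ext i
    simp [Pi.single_apply]
  have hdiag : bccGram ℝ j j = 3 := by fin_cases j <;> rfl
  refine ⟨Pi.single j 1, by simp, ?_⟩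
  rw [sqnorm_mulVec, hr, dotProduct_sub_vecMulVec_mulVec, hcast]
  simp [hj, hdiag]

end Code

/-- The paper's `(4,3)` construction with the body-centered cubic mother lattice:
with `b = 1/2 + √(1/2)` and `c = 1/2 − √(1/2)`, `Mᵀ M` is the BCC Gram matrix, and
every child lattice `M_S ℤ³` has Gram determinant `4` and shortest nonzero vector of
squared length exactly `9/4 − 1/√2`. -/
theorem four_three_bcc_construction :
    letI b : ℝ := 1 / 2 + Real.sqrt (1 / 2)
    letI c : ℝ := 1 / 2 - Real.sqrt (1 / 2)
    letI M : Matrix (Fin 4) (Fin 3) ℝ :=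
      !![-c, c, b; -c, b, c; -b, c, b; b, -b, -c]
    Mᵀ * M = !![3, -1, -1; -1, 3, -1; -1, -1, 3] ∧
    ∀ S : {s : Finset (Fin 4) // s.card = 3},
      ((rowsSub M S)ᵀ * rowsSub M S).det = 4 ∧
      (∀ u : Fin 3 → ℤ, u ≠ 0 →
        9 / 4 - 1 / Real.sqrt 2 ≤ sqnorm ((rowsSub M S).mulVec fun j => (u j : ℝ))) ∧
      (∃ u : Fin 3 → ℤ, u ≠ 0 ∧
        sqnorm ((rowsSub M S).mulVec fun j => (u j : ℝ)) = 9 / 4 - 1 / Real.sqrt 2) := by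
  let b : ℝ := 1 / 2 + Real.sqrt (1 / 2)
  let c : ℝ := 1 / 2 - Real.sqrt (1 / 2)
  have hsqrt : Real.sqrt (1 / 2) ^ 2 = 1 / 2 := Real.sq_sqrt (by norm_num)
  have hadd : b + c = 1 := by ring
  have hmul : b * c = -1 / 4 := by linear_combination -hsqrt
  have hb : 0 < b := by positivity
  have hmin : 9 / 4 - 1 / Real.sqrt 2 = 3 - b ^ 2 := by
    rw [one_div, ← Real.sqrt_inv, ← one_div]
    linear_combination hsqrt
  rw [hmin]
  exact ⟨transpose_codeMatrix_mul_self hadd hmul, fun S =>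
    ⟨det_gram_rowsSub_codeMatrix hadd hmul S,
      fun _ hu => three_sub_sq_le_sqnorm_rowsSub_codeMatrix hadd hmul hb S hu,
      exists_sqnorm_rowsSub_codeMatrix_eq hadd hmul S⟩⟩
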